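/- Let p be a real number with 1 ≤ p < ∞. Let G̃ : ℓ^m → ℓ^r (the true plant) be strictly causal, ℓ_p-stable, and incrementally finite-gain ℓ_p-stable, and let G : ℓ^m → ℓ^r (the nominal model) be strictly causal. Assume that the mismatch output is always summable: G̃ u − G u ∈ ℓ_p^r for every sequence u ∈ ℓ^m (not only for u ∈ ℓ_p^m). Then for every causal, ℓ_p-stable operator Q : ℓ^r → ℓ^m, the closed loop with the internal-model controller built from G applied to the plant G̃ (the unique signals satisfying u° = Q ω, ω = y − G u°, y = G̃(u° + d) + v) is ℓ_p-stable: for all v ∈ ℓ_p^r and d ∈ ℓ_p^m, one has ω ∈ ℓ_p^r, u° ∈ ℓ_p^m, and y ∈ ℓ_p^r. -/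

import Mathlib

/-- Sequences with values in `ℝ^n` (with the Euclidean norm). -/
abbrev Traj (n : ℕ) : Type := ℕ → EuclideanSpace ℝ (Fin n)

/-- A causal operator on sequences. -/
def Causal {n m : ℕ} (A : Traj n → Traj m) : Prop :=
  ∀ (x x' : Traj n) (t : ℕ), (∀ s, s ≤ t → x s = x' s) → A x t = A x' t

/-- A strictly causal operator on sequences. -/
def StrictlyCausal {n m : ℕ} (A : Traj n → Traj m) : Prop :=
  ∀ (x x' : Traj n) (t : ℕ), (∀ s, s < t → x s = x' s) → A x t = A x' t

/-- Causal in the first argument, strictly causal in the second argument. -/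
def CausalSC {n q m : ℕ} (B : Traj n → Traj q → Traj m) : Prop :=
  ∀ (x x' : Traj n) (z z' : Traj q) (t : ℕ),
    (∀ s, s ≤ t → x s = x' s) → (∀ s, s < t → z s = z' s) → B x z t = B x' z' t

/-- Causal in both arguments. -/
def CausalCC {n q m : ℕ} (B : Traj n → Traj q → Traj m) : Prop :=
  ∀ (x x' : Traj n) (z z' : Traj q) (t : ℕ),
    (∀ s, s ≤ t → x s = x' s) → (∀ s, s ≤ t → z s = z' s) → B x z t = B x' z' t

/-- Strictly causal in both arguments. -/
def CausalSS {n q m : ℕ} (B : Traj n → Traj q → Traj m) : Prop :=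
  ∀ (x x' : Traj n) (z z' : Traj q) (t : ℕ),
    (∀ s, s < t → x s = x' s) → (∀ s, s < t → z s = z' s) → B x z t = B x' z' t

/-- Membership in `ℓ_p`: summability of `‖x t‖ ^ p`. -/
def InLp (p : ℝ) {E : Type*} [Norm E] (x : ℕ → E) : Prop :=
  Summable fun t => ‖x t‖ ^ p

/-- The `ℓ_p` norm `(∑ₜ ‖x t‖ ^ p) ^ (1/p)` of a sequence. -/
noncomputable def lpSeqNorm (p : ℝ) {E : Type*} [Norm E] (x : ℕ → E) : ℝ :=
  (∑' t, ‖x t‖ ^ p) ^ (1 / p)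

/-- The `ℝ^{r+m}`-valued sequence obtained by stacking `v` and `d`
(the norm of `(v t, d t)` is the Euclidean norm of the concatenated vector). -/
noncomputable def pairSeq {r m : ℕ} (v : Traj r) (d : Traj m) :
    ℕ → WithLp 2 (EuclideanSpace ℝ (Fin r) × EuclideanSpace ℝ (Fin m)) :=
  fun t => (WithLp.equiv 2 _).symm (v t, d t)

/-- An exponentially decaying sequence: `‖x t‖ ≤ k · α ^ t` with `k > 0`, `α ∈ (0,1)`. -/
def ExpDecay {E : Type*} [Norm E] (x : ℕ → E) : Prop :=
  ∃ k : ℝ, 0 < k ∧ ∃ α : ℝ, 0 < α ∧ α < 1 ∧ ∀ t, ‖x t‖ ≤ k * α ^ t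

/-!
The internal-model loop feeds back only what the nominal model fails to predict:
`ω = (G̃ (u° + d) - G̃ u°) + (G̃ u° - G u°) + v`. The last two terms are in `ℓ_p` by hypothesis.
The first is because an incremental gain bound extends from `ℓ_p` inputs to arbitrary inputs at
`ℓ_p` distance: by causality, the output before time `T` is unchanged when the common part of the
two inputs is cut off at `T`. Stability of `Q` and `G̃` then carries `ω ∈ ℓ_p` over to `u°` and `y`.
-/

section Signals

variable {E : Type*} [NormedAddCommGroup E] {p : ℝ} {x y : ℕ → E}

theorem inLp_iff_memℓp (hp : 0 < p) : InLp p x ↔ Memℓp x (ENNReal.ofReal p) := by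
  rw [memℓp_gen_iff (by rwa [ENNReal.toReal_ofReal hp.le]), ENNReal.toReal_ofReal hp.le]
  rfl

theorem InLp.add (hp : 0 < p) (hx : InLp p x) (hy : InLp p y) : InLp p (x + y) := by
  rw [inLp_iff_memℓp hp] at *
  exact Memℓp.add hx hy

theorem InLp.sub (hp : 0 < p) (hx : InLp p x) (hy : InLp p y) : InLp p (x - y) := by
  rw [inLp_iff_memℓp hp] at *
  exact Memℓp.sub hx hy

theorem inLp_indicator_of_finite (hp : 0 < p) {s : Set ℕ} (hs : s.Finite) (x : ℕ → E) :
    InLp p (s.indicator x) :=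
  (inLp_iff_memℓp hp).2 <|
    (memℓp_zero (hs.subset fun _ => Set.mem_of_indicator_ne_zero)).of_exponent_ge zero_le

end Signals

section Norm

variable {E : Type*} [SeminormedAddCommGroup E] {p : ℝ}

theorem lpSeqNorm_nonneg (p : ℝ) (x : ℕ → E) : 0 ≤ lpSeqNorm p x := by
  unfold lpSeqNorm
  positivity

theorem lpSeqNorm_rpow (hp : p ≠ 0) (x : ℕ → E) : lpSeqNorm p x ^ p = ∑' t, ‖x t‖ ^ p := by
  rw [lpSeqNorm, one_div, Real.rpow_inv_rpow (by positivity) hp]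

theorem InLp.sum_norm_rpow_le (hp : p ≠ 0) {x : ℕ → E} (hx : InLp p x) (s : Finset ℕ) :
    ∑ t ∈ s, ‖x t‖ ^ p ≤ lpSeqNorm p x ^ p := by
  rw [lpSeqNorm_rpow hp]
  exact Summable.sum_le_tsum s (fun _ _ => by positivity) hx

end Norm

/-- Causality of an operator on sequences with values in arbitrary types; on `Traj` it is
`Causal`. -/
def IsCausal {E F : Type*} (A : (ℕ → E) → ℕ → F) : Prop :=
  ∀ (x x' : ℕ → E) (t : ℕ), (∀ s, s ≤ t → x s = x' s) → A x t = A x' t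

theorem StrictlyCausal.isCausal {n m : ℕ} {A : Traj n → Traj m} (hA : StrictlyCausal A) :
    IsCausal A :=
  fun x x' t h => hA x x' t fun s hs => h s hs.le

/-- `ℓ_p`-stability of an operator on sequences: `ℓ_p` inputs give `ℓ_p` outputs. -/
def IsLpStable (p : ℝ) {E F : Type*} [Norm E] [Norm F] (A : (ℕ → E) → ℕ → F) : Prop :=
  ∀ u, InLp p u → InLp p (A u)

/-- Incremental finite-gain `ℓ_p`-stability: a Lipschitz bound in the `ℓ_p` norm, required between
`ℓ_p` inputs only. Since `lpSeqNorm` has a junk value outside `ℓ_p`, the bound is informative only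
together with `IsLpStable`. -/
def IsIncrementallyFiniteGain (p : ℝ) {E F : Type*} [SeminormedAddCommGroup E]
    [SeminormedAddCommGroup F] (A : (ℕ → E) → ℕ → F) : Prop :=
  ∃ γ : ℝ, 0 ≤ γ ∧ ∀ u₁ u₂, InLp p u₁ → InLp p u₂ →
    lpSeqNorm p (A u₁ - A u₂) ≤ γ * lpSeqNorm p (u₁ - u₂)

section Operators

variable {E F : Type*} [NormedAddCommGroup E] [NormedAddCommGroup F] {p : ℝ}

theorem IsCausal.inLp_sub {A : (ℕ → E) → ℕ → F} (hcausal : IsCausal A) (hp : 0 < p)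
    (hstable : IsLpStable p A) (hgain : IsIncrementallyFiniteGain p A) {u₁ u₂ : ℕ → E}
    (hu : InLp p (u₁ - u₂)) : InLp p (A u₁ - A u₂) := by
  obtain ⟨γ, -, hγ⟩ := hgain
  refine summable_of_sum_range_le (c := (γ * lpSeqNorm p (u₁ - u₂)) ^ p)
    (fun _ => by positivity) fun T => ?_
  -- Only `u₂` is truncated, so that `w₁ - w₂` is still `u₁ - u₂`.
  let w₂ : ℕ → E := (Set.Iio T).indicator u₂
  let w₁ : ℕ → E := w₂ + (u₁ - u₂)
  have hw₂ : InLp p w₂ := inLp_indicator_of_finite hp (Set.finite_Iio T) u₂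
  have hw₁ : InLp p w₁ := hw₂.add hp hu
  have eq_w₂ : ∀ s < T, u₂ s = w₂ s := fun s hs => (Set.indicator_of_mem (Set.mem_Iio.2 hs) u₂).symm
  have eq_w₁ : ∀ s < T, u₁ s = w₁ s := fun s hs => by
    simp only [w₁, Pi.add_apply, Pi.sub_apply, ← eq_w₂ s hs, add_sub_cancel]
  have output_eq : ∀ t < T, (A u₁ - A u₂) t = (A w₁ - A w₂) t := fun t ht =>
    congrArg₂ (· - ·) (hcausal u₁ w₁ t fun s hs => eq_w₁ s (hs.trans_lt ht))
      (hcausal u₂ w₂ t fun s hs => eq_w₂ s (hs.trans_lt ht))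
  have gain_w : lpSeqNorm p (A w₁ - A w₂) ≤ γ * lpSeqNorm p (u₁ - u₂) := by
    simpa only [w₁, add_sub_cancel_left] using hγ w₁ w₂ hw₁ hw₂
  calc ∑ t ∈ Finset.range T, ‖(A u₁ - A u₂) t‖ ^ p
      = ∑ t ∈ Finset.range T, ‖(A w₁ - A w₂) t‖ ^ p :=
        Finset.sum_congr rfl fun t ht => by rw [output_eq t (Finset.mem_range.1 ht)]
    _ ≤ lpSeqNorm p (A w₁ - A w₂) ^ p :=
        ((hstable w₁ hw₁).sub hp (hstable w₂ hw₂)).sum_norm_rpow_le hp.ne' _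
    _ ≤ (γ * lpSeqNorm p (u₁ - u₂)) ^ p :=
        Real.rpow_le_rpow (lpSeqNorm_nonneg p _) gain_w hp.le

theorem statement15_general {Gt G : (ℕ → E) → ℕ → F} {Q : (ℕ → F) → ℕ → E} (hp : 0 < p)
    (hGt : IsCausal Gt) (hGtstab : IsLpStable p Gt) (hGtifg : IsIncrementallyFiniteGain p Gt)
    (hΔ : ∀ u, InLp p (Gt u - G u)) (hQstab : IsLpStable p Q)
    {v y ω : ℕ → F} {d u0 : ℕ → E} (hv : InLp p v) (hd : InLp p d)
    (hu0 : u0 = Q ω) (hω : ω = y - G u0) (hy : y = Gt (u0 + d) + v) :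
    InLp p ω ∧ InLp p u0 ∧ InLp p y := by
  have ω_eq : ω = (Gt (u0 + d) - Gt u0) + (Gt u0 - G u0) + v := by
    rw [hω, hy]
    abel
  have disturbance_mem : InLp p (Gt (u0 + d) - Gt u0) :=
    hGt.inLp_sub hp hGtstab hGtifg (by rwa [add_sub_cancel_left])
  have ω_mem : InLp p ω := ω_eq ▸ (disturbance_mem.add hp (hΔ u0)).add hp hv
  have u0_mem : InLp p u0 := hu0 ▸ hQstab ω ω_mem
  have y_mem : InLp p y := hy ▸ (hGtstab _ (u0_mem.add hp hd)).add hp hv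
  exact ⟨ω_mem, u0_mem, y_mem⟩

end Operators

/-- robustness of the internal-model controller when the mismatch output
`G̃ u − G u` is ℓ_p-summable for EVERY input sequence `u`: then the closed loop is
ℓ_p-stable for any causal ℓ_p-stable `Q`. -/
theorem statement15 {r m : ℕ} (p : ℝ) (hp : 1 ≤ p)
    (Gt G : Traj m → Traj r) (Q : Traj r → Traj m)
    (hGt : StrictlyCausal Gt)
    (hGtstab : ∀ u : Traj m, InLp p u → InLp p (Gt u))
    (hGtifg : ∃ γ : ℝ, 0 ≤ γ ∧ ∀ u₁ u₂ : Traj m, InLp p u₁ → InLp p u₂ →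
      lpSeqNorm p (Gt u₁ - Gt u₂) ≤ γ * lpSeqNorm p (u₁ - u₂))
    (hG : StrictlyCausal G)
    -- the mismatch output is ℓ_p for every input sequence, not only ℓ_p ones
    (hΔ : ∀ u : Traj m, InLp p (Gt u - G u))
    (hQ : Causal Q)
    (hQstab : ∀ ω : Traj r, InLp p ω → InLp p (Q ω)) :
    ∀ (v : Traj r) (d : Traj m), InLp p v → InLp p d →
      ∀ (y ω : Traj r) (u0 : Traj m),
        u0 = Q ω → ω = y - G u0 → y = Gt (u0 + d) + v →
        InLp p ω ∧ InLp p u0 ∧ InLp p y := by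
  intro v d hv hd y ω u0 hu0 hω hy
  exact statement15_general (zero_lt_one.trans_le hp) hGt.isCausal hGtstab hGtifg hΔ hQstab hv hd
    hu0 hω hy
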